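/- arXiv:math/0501247 — 2 statements merged into one kernel-verified Lean document; each statement's English description precedes it below -/
import Mathlib

section
/- Let A be a Poisson algebra over a field k of characteristic p > 2, and let ξ : A → A be a conformal derivation of weight λ ∈ k, i.e. a derivation of the commutative product satisfying ξ({x,y}) = {ξ(x), y} + {x, ξ(y)} − λ{x,y}. Suppose A carries a restricted Poisson structure x ↦ x^{[p]}. Then the map κ : A → A defined by κ(a) = (ξ − λ·id)(a^{[p]}) − (ad a)^{p-1}(ξ(a)) satisfies κ(a+b) = κ(a) + κ(b) and κ(ab) = a^p κ(b) + b^p κ(a) for all a, b ∈ A, and κ takes values in the Poisson center of A. -/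
/-! Universal quantized polynomials.  We model the free quantized algebra
`Q(x,y)` (the Rees algebra of the PBW filtration on the free associative
algebra on two generators) inside the polynomial ring in one central variable
`h` over the free associative algebra: `x` corresponds to `Xe = x·h`,
`y` to `Ye = y·h`, and `h` to the polynomial variable `he`. -/

/-- Ambient ring: polynomials in a central variable `h` over the free
associative `k`-algebra on two generators. -/
abbrev Amb (k : Type*) [Field k] : Type _ := Polynomial (FreeAlgebra k (Fin 2))

/-- The image of the generator `x` in the Rees-algebra model. -/
noncomputable def Xe (k : Type*) [Field k] : Amb k :=
  Polynomial.C (FreeAlgebra.ι k (0 : Fin 2)) * Polynomial.X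

/-- The image of the generator `y` in the Rees-algebra model. -/
noncomputable def Ye (k : Type*) [Field k] : Amb k :=
  Polynomial.C (FreeAlgebra.ι k (1 : Fin 2)) * Polynomial.X

/-- The central parameter `h` in the Rees-algebra model. -/
noncomputable def he (k : Type*) [Field k] : Amb k := Polynomial.X

/-- Evaluation relation for quantized polynomials.  `QEval k hA bra u v q w`
holds if the quantized polynomial `q` (an element of the free quantized algebra
on two generators `x, y`) evaluates to `w` when `x ↦ u`, `y ↦ v`, `h ↦ hA`,
products map to products, `k`-linear structure to `k`-linear structure, and the
universal bracket `{a,b}` (characterized by `h·{a,b} = a*b - b*a`) maps to the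
bracket `bra` of the target algebra. -/
inductive QEval (k : Type*) [Field k] {A : Type*} [Ring A] [Algebra k A]
    (hA : A) (bra : A → A → A) (u v : A) : Amb k → A → Prop
  | X : QEval k hA bra u v (Xe k) u
  | Y : QEval k hA bra u v (Ye k) v
  | h : QEval k hA bra u v (he k) hA
  | add {a b : Amb k} {x y : A} : QEval k hA bra u v a x → QEval k hA bra u v b y →
      QEval k hA bra u v (a + b) (x + y)
  | smul (c : k) {a : Amb k} {x : A} : QEval k hA bra u v a x →
      QEval k hA bra u v (c • a) (c • x)
  | mul {a b : Amb k} {x y : A} : QEval k hA bra u v a x → QEval k hA bra u v b y →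
      QEval k hA bra u v (a * b) (x * y)
  | bracket {a b c : Amb k} {x y : A} : QEval k hA bra u v a x → QEval k hA bra u v b y →
      he k * c = a * b - b * a → QEval k hA bra u v c (bra x y)

/-- `IsLval k p hA bra u v w` : `w` is the value at `(u, v)` of the universal
(Jacobson) polynomial `L(x,y)`, i.e. of the canonical quantized polynomial `L`
with `h^(p-1) · L = (x+y)^p - x^p - y^p` in the free quantized algebra. -/
def IsLval (k : Type*) [Field k] {A : Type*} [Ring A] [Algebra k A]
    (p : ℕ) (hA : A) (bra : A → A → A) (u v w : A) : Prop :=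
  ∃ L : Amb k, he k ^ (p - 1) * L = (Xe k + Ye k) ^ p - Xe k ^ p - Ye k ^ p ∧
    QEval k hA bra u v L w

/-- `IsPval k p hA bra u v w` : `w` is the value at `(u, v)` of the canonical
universal quantized polynomial `P(x,y)` with
`h^(p-1) · P = (x*y)^p - x^p * y^p` in the free quantized algebra. -/
def IsPval (k : Type*) [Field k] {A : Type*} [Ring A] [Algebra k A]
    (p : ℕ) (hA : A) (bra : A → A → A) (u v w : A) : Prop :=
  ∃ P : Amb k, he k ^ (p - 1) * P = (Xe k * Ye k) ^ p - Xe k ^ p * Ye k ^ p ∧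
    QEval k hA bra u v P w


open Polynomial in
theorem aux_choose {k : Type*} [Field k] {p : ℕ} (hp : p.Prime) [CharP k p] (i : ℕ) (hi : i ≤ p - 1) :
    ((p - 1).choose i : k) = (-1) ^ i := by
  induction i with
  | zero => simp
  | succ i ih =>
    have h1 := ih (by omega)
    have h2 : ((p.choose (i+1) : ℕ) : k) = 0 := by
      rw [CharP.cast_eq_zero_iff k p]
      exact hp.dvd_choose_self (by omega) (by omega)
    have h3 : p.choose (i+1) = (p-1).choose i + (p-1).choose (i+1) := by
      have : p = (p - 1) + 1 := by omega
      conv_lhs => rw [this]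
      exact Nat.choose_succ_succ _ _
    rw [h3] at h2
    push_cast at h2
    rw [h1] at h2
    rw [pow_succ]
    linear_combination h2

theorem aux_geom {k R : Type*} [Field k] [Ring R] [Algebra k R] {p : ℕ} (hp : p.Prime) (hp2 : 2 < p) [CharP k p]
    (x y : R) (h : Commute x y) :
    (x - y) ^ (p - 1) = ∑ i ∈ Finset.range p, x ^ i * y ^ (p - 1 - i) := by
  have hpp : p - 1 + 1 = p := by omega
  rw [sub_eq_add_neg, (h.neg_right).add_pow, hpp]
  refine Finset.sum_congr rfl fun i hi => ?_
  have hi' : i ≤ p - 1 := by have := Finset.mem_range.1 hi; omega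
  have h1 : (((p - 1).choose i : ℕ) : R) = (-1) ^ i := by
    have := congrArg (algebraMap k R) (aux_choose hp i hi')
    simpa using this
  rw [h1, neg_pow y, mul_assoc, mul_assoc, (((Commute.neg_one_left y).pow_pow i (p - 1 - i)).symm).eq]
  have hodd : Even (p - 1) := by
    have := hp.odd_of_ne_two (by omega)
    obtain ⟨r, hr⟩ := this
    exact ⟨r, by omega⟩
  have h2 : ((-1 : R)) ^ (p - 1 - i) * (-1) ^ i = 1 := by
    rw [← pow_add, Nat.sub_add_cancel hi']
    exact hodd.neg_one_pow
  rw [← mul_assoc ((-1 : R) ^ (p - 1 - i)), h2, one_mul]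

theorem aux_comm_iter {k R : Type*} [Field k] [Ring R] [Algebra k R] (c y : R) (n : ℕ) :
    (fun z => c * z - z * c)^[n] y =
      ((LinearMap.mulLeft k c - LinearMap.mulRight k c) ^ n) y := by
  rw [Module.End.pow_apply]
  rfl

theorem aux_ad_pred {k R : Type*} [Field k] [Ring R] [Algebra k R] {p : ℕ} (hp : p.Prime) (hp2 : 2 < p) [CharP k p]
    (c y : R) : (fun z => c * z - z * c)^[p - 1] y =
      ∑ i ∈ Finset.range p, c ^ i * y * c ^ (p - 1 - i) := by
  rw [aux_comm_iter (k := k), aux_geom (k := k) hp hp2 _ _ (LinearMap.ext fun z => by simp [mul_assoc])]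
  simp [LinearMap.sum_apply, LinearMap.pow_mulLeft, LinearMap.pow_mulRight, mul_assoc]

theorem aux_ad_p {k R : Type*} [Field k] [Ring R] [Algebra k R] {p : ℕ} (hp : p.Prime) (hp2 : 2 < p) [CharP k p]
    (c y : R) : (fun z => c * z - z * c)^[p] y = c ^ p * y - y * c ^ p := by
  have hpp : p = (p - 1) + 1 := by omega
  conv_lhs => rw [hpp, Function.iterate_succ_apply', aux_ad_pred (k := k) hp hp2]
  rw [Finset.mul_sum, Finset.sum_mul, ← Finset.sum_sub_distrib]
  have : ∀ i ∈ Finset.range p, c * (c ^ i * y * c ^ (p - 1 - i)) - c ^ i * y * c ^ (p - 1 - i) * c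
      = (fun i => c ^ i * y * c ^ (p - i)) (i + 1) - (fun i => c ^ i * y * c ^ (p - i)) i := by
    intro i hi
    have := Finset.mem_range.1 hi
    have h1 : p - i = (p - 1 - i) + 1 := by omega
    have h2 : p - (i + 1) = p - 1 - i := by omega
    simp only [h1, h2, pow_succ' c i, pow_succ c (p - 1 - i), mul_assoc]
  rw [Finset.sum_congr rfl this, Finset.sum_range_sub (fun i => c ^ i * y * c ^ (p - i))]
  simp

/-- coefficient form of the operator of the linear polynomial with coefficients `a`, `b`. -/
def TT {M : Type*} [Add M] (m : M → M → M) (a b : M) (g : ℕ → M) : ℕ → M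
  | 0 => m b (g 0)
  | i + 1 => m a (g i) + m b (g (i + 1))

theorem aux_TT {M : Type*} [AddCommGroup M] (m : M → M → M)
    (h1 : ∀ x y z, m (x + y) z = m x z + m y z) (h2 : ∀ x y z, m x (y + z) = m x y + m x z)
    (a b : M) (g : ℕ → M) (N : ℕ) (hg : ∀ i, N < i → g i = 0) (n : ℕ) :
    (∀ i, N + n < i → (TT m a b)^[n] g i = 0) ∧
    (TT m a b)^[n] g 0 = (m b)^[n] (g 0) ∧
    (TT m a b)^[n] g (N + n) = (m a)^[n] (g N) ∧
    ∑ i ∈ Finset.range (N + n + 1), (TT m a b)^[n] g i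
      = (m (a + b))^[n] (∑ i ∈ Finset.range (N + 1), g i) := by
  have h0 : ∀ x, m x 0 = 0 := fun x => by
    have := h2 x 0 0
    simpa using this
  induction n with
  | zero => 
    refine ⟨by simpa using hg, rfl, rfl, rfl⟩
  | succ n ih =>
    obtain ⟨i1, i2, i3, i4⟩ := ih
    simp only [Function.iterate_succ_apply']
    generalize (TT m a b)^[n] g = f at *
    refine ⟨?_, ?_, ?_, ?_⟩
    · intro i hi
      cases i with
      | zero => omega
      | succ i => simp [TT, i1 i (by omega), i1 (i+1) (by omega), h0]
    · simp [TT, i2]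
    · rw [← add_assoc]
      simp [TT, i3, i1 (N + n + 1) (by omega), h0]
    · rw [← i4, ← add_assoc, Finset.sum_range_succ', h1]
      simp only [TT, Finset.sum_add_distrib]
      have hs : ∀ x (s : Finset ℕ), m x (∑ i ∈ s, f i) = ∑ i ∈ s, m x (f i) := fun x s =>
        map_sum (AddMonoidHom.mk' (m x) (h2 x)) f s
      rw [hs, hs, add_assoc, ← Finset.sum_range_succ' (fun i => m b (f i)),
        Finset.sum_range_succ (fun i => m b (f i)) (N + n + 1), i1 (N + n + 1) (by omega), h0,
        add_zero]

/-- The Jacobson polynomial in explicit form. -/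
noncomputable def JJ (k : Type*) [Field k] {M : Type*} [AddCommGroup M] [Module k M]
    (m : M → M → M) (p : ℕ) (a b : M) : M :=
  ∑ i ∈ Finset.range (p - 1), ((i + 1 : ℕ) : k)⁻¹ • (TT m a b)^[p - 1] (Pi.single 0 a) i

open Polynomial in
theorem aux_derivative_pow {R : Type*} [Ring R] (c : R[X]) (n : ℕ) :
    derivative (c ^ n) = ∑ i ∈ Finset.range n, c ^ i * derivative c * c ^ (n - 1 - i) := by
  induction n with
  | zero => simp
  | succ n ih =>
    rw [pow_succ, derivative_mul, ih, Finset.sum_range_succ, Finset.sum_mul]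
    simp only [Nat.add_sub_cancel, Nat.sub_self, pow_zero, mul_one]
    congr 1
    refine Finset.sum_congr rfl fun i hi => ?_
    have := Finset.mem_range.1 hi
    have h1 : n - i = (n - 1 - i) + 1 := by omega
    rw [h1, pow_succ, mul_assoc _ _ c]

theorem aux_cast_ne {k : Type*} [Field k] {p : ℕ} [CharP k p] (i : ℕ) (hi : i < p - 1) :
    ((i + 1 : ℕ) : k) ≠ 0 := by
  rw [Ne, CharP.cast_eq_zero_iff k p]
  intro h
  have := Nat.le_of_dvd (by omega) h
  omega

theorem aux_sum_ends {M : Type*} [AddCommGroup M] {p : ℕ} (hp : 1 ≤ p) (f : ℕ → M) :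
    ∑ i ∈ Finset.range (p + 1), f i = (∑ i ∈ Finset.range (p - 1), f (i + 1)) + f 0 + f p := by
  obtain ⟨q, rfl⟩ : ∃ q, p = q + 1 := ⟨p - 1, by omega⟩
  rw [Finset.sum_range_succ, Finset.sum_range_succ']
  simp

open Polynomial in
theorem aux_jacobson {k R : Type*} [Field k] [Ring R] [Algebra k R] {p : ℕ} (hp : p.Prime) (hp2 : 2 < p) [CharP k p]
    (a b : R) : (a + b) ^ p - a ^ p - b ^ p = JJ k (fun x y => x * y - y * x) p a b := by
  set c : R[X] := C a * X + C b with hc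
  have hm : ∀ P : R[X], (fun i => (c * P).coeff i) = TT (· * ·) a b (fun i => P.coeff i) := by
    intro P
    ext i
    cases i <;> simp [hc, TT, add_mul, mul_assoc]
  have hk : ∀ P : R[X], (fun i => (c * P - P * c).coeff i)
      = TT (fun x y => x * y - y * x) a b (fun i => P.coeff i) := by
    intro P
    ext i
    have e1 : c * P = C a * (X * P) + C b * P := by rw [hc, add_mul, mul_assoc]
    have e2 : P * c = P * C a * X + P * C b := by rw [hc, mul_add, mul_assoc]
    rw [e1, e2]
    cases i
    · simp [TT]
    · simp [TT]
      abel
  have hm' : ∀ n, (fun i => (c ^ n).coeff i) = (TT (· * ·) a b)^[n] (Pi.single 0 1) := by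
    intro n
    induction n with
    | zero => 
      ext i
      simp [coeff_one, Pi.single_apply]
    | succ n ih => rw [Function.iterate_succ_apply', ← ih, ← hm, pow_succ']
  have hk' : ∀ n, (fun i => ((fun z => c * z - z * c)^[n] (C a)).coeff i)
      = (TT (fun x y => x * y - y * x) a b)^[n] (Pi.single 0 a) := by
    intro n
    induction n with
    | zero => 
      ext i
      simp [coeff_C, Pi.single_apply]
    | succ n ih => rw [Function.iterate_succ_apply', Function.iterate_succ_apply', ← ih, ← hk]
  have hd : derivative (c ^ p) = (fun z => c * z - z * c)^[p - 1] (C a) := by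
    rw [aux_derivative_pow, aux_ad_pred (k := k) hp hp2]
    simp [hc]
  obtain ⟨-, t2, t3, t4⟩ := aux_TT (M := R) (· * ·) (fun x y z => add_mul x y z) (fun x y z => mul_add x y z)
    a b (Pi.single 0 1) 0 (fun i hi => by simp [hi.ne']) p
  rw [← hm'] at t2 t3 t4
  have it : ∀ x : R, ((fun z => x * z)^[p]) 1 = x ^ p := fun x => by
    rw [mul_left_iterate]
    simp
  simp only [zero_add, Finset.range_one, Finset.sum_singleton, Pi.single_eq_same, it] at t2 t3 t4
  rw [aux_sum_ends (by omega), t2, t3] at t4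
  rw [← t4]
  have : ∑ i ∈ Finset.range (p - 1), (c ^ p).coeff (i + 1) = JJ k (fun x y => x * y - y * x) p a b := by
    refine Finset.sum_congr rfl fun i hi => ?_
    have hi := Finset.mem_range.1 hi
    have e := congrFun (hk' (p - 1)) i
    rw [← e]
    rw [← hd, coeff_derivative]
    have : ((i : R) + 1) = algebraMap k R ((i + 1 : ℕ) : k) := by simp
    rw [this, ← Algebra.commutes, ← Algebra.smul_def, smul_smul, inv_mul_cancel₀ (aux_cast_ne i hi),
      one_smul]
  rw [this]
  abel

theorem aux_lie_pow {k L : Type*} [Field k] [LieRing L] [LieAlgebra k L] (c q a : L) (n : ℕ) :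
    ((LieAlgebra.ad k L c) ^ n) ⁅q, a⁆ = ∑ m ∈ Finset.range (n + 1), n.choose m •
      ⁅((LieAlgebra.ad k L c) ^ m) q, ((LieAlgebra.ad k L c) ^ (n - m)) a⁆ := by
  rw [LieAlgebra.ad_pow_lie,
    Finset.Nat.sum_antidiagonal_eq_sum_range_succ (fun i j => n.choose i •
      ⁅((LieAlgebra.ad k L c) ^ i) q, ((LieAlgebra.ad k L c) ^ j) a⁆)]

theorem aux_lieA {k L : Type*} [Field k] [LieRing L] [LieAlgebra k L] (c q : L) (n : ℕ) (a : L) :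
    ∑ i ∈ Finset.range n, ((LieAlgebra.ad k L c) ^ i) ⁅q, ((LieAlgebra.ad k L c) ^ (n - 1 - i)) a⁆
    = ∑ m ∈ Finset.range n, n.choose (m + 1) •
      ⁅((LieAlgebra.ad k L c) ^ m) q, ((LieAlgebra.ad k L c) ^ (n - 1 - m)) a⁆ := by
  induction n generalizing a with
  | zero => simp
  | succ n ih =>
    have hE : ∀ m ∈ Finset.range n, ((LieAlgebra.ad k L c) ^ (n - m)) a
        = ((LieAlgebra.ad k L c) ^ (n - 1 - m)) (LieAlgebra.ad k L c a) := by
      intro m hm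
      have := Finset.mem_range.1 hm
      have h1 : n - m = (n - 1 - m) + 1 := by omega
      rw [h1, pow_succ, Module.End.mul_apply]
    have e1 : ∑ i ∈ Finset.range n, ((LieAlgebra.ad k L c) ^ i) ⁅q, ((LieAlgebra.ad k L c) ^ (n - i)) a⁆
        = ∑ m ∈ Finset.range (n + 1), n.choose (m + 1) •
      ⁅((LieAlgebra.ad k L c) ^ m) q, ((LieAlgebra.ad k L c) ^ (n - m)) a⁆ := by
      rw [Finset.sum_range_succ, Nat.choose_succ_self, zero_smul, add_zero]
      rw [Finset.sum_congr rfl (fun m hm => by rw [hE m hm]), ih]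
      exact Finset.sum_congr rfl (fun m hm => by rw [hE m hm])
    rw [Finset.sum_range_succ]
    simp only [Nat.add_sub_cancel, Nat.sub_self, pow_zero, Module.End.one_apply]
    rw [e1, aux_lie_pow, ← Finset.sum_add_distrib]
    refine Finset.sum_congr rfl fun m hm => ?_
    rw [← add_smul, Nat.choose_succ_succ, Nat.add_comm]

theorem aux_lieSym {k L : Type*} [Field k] [LieRing L] [LieAlgebra k L] {p : ℕ} (hp : p.Prime) (hp2 : 2 < p)
    [CharP k p] (c q a : L) :
    ∑ i ∈ Finset.range (p - 1), ((LieAlgebra.ad k L c) ^ i) ⁅q, ((LieAlgebra.ad k L c) ^ (p - 1 - 1 - i)) a⁆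
    = ∑ i ∈ Finset.range (p - 1), ((LieAlgebra.ad k L c) ^ i) ⁅a, ((LieAlgebra.ad k L c) ^ (p - 1 - 1 - i)) q⁆ := by
  rw [aux_lieA, aux_lieA]
  conv_rhs => rw [← Finset.sum_range_reflect]
  refine Finset.sum_congr rfl fun m hm => ?_
  have hm := Finset.mem_range.1 hm
  have h1 : p - 1 - 1 - (p - 1 - 1 - m) = m := by omega
  have h2 : p - 1 - 1 - m + 1 = p - 1 - (m + 1) + 1 := by omega
  rw [h1, ← lie_skew, ← Nat.cast_smul_eq_nsmul k, ← Nat.cast_smul_eq_nsmul k,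
    aux_choose hp _ (by omega), aux_choose hp _ (by omega), smul_neg, ← neg_smul]
  congr 1
  have hodd := hp.odd_of_ne_two (by omega)
  have h3 : ((-1 : k)) ^ (m + 1) * (-1) ^ (p - 1 - 1 - m + 1) = -1 := by
    rw [← pow_add]
    apply Odd.neg_one_pow
    have : m + 1 + (p - 1 - 1 - m + 1) = p := by omega
    rwa [this]
  have h4 : ((-1 : k)) ^ (m + 1) * (-1) ^ (m + 1) = 1 := by
    rw [← pow_add]
    exact Even.neg_one_pow ⟨_, rfl⟩
  linear_combination (-1) ^ (p - 1 - 1 - m + 1) * h4 - (-1 : k) ^ (m+1) * h3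

theorem aux_conf_pow {k L : Type*} [Field k] [LieRing L] [LieAlgebra k L] (lam : k) (ξ : L →ₗ[k] L)
    (hξ : ∀ x y, ξ ⁅x, y⁆ = ⁅ξ x, y⁆ + ⁅x, ξ y⁆ - lam • ⁅x, y⁆) (c : L) (n : ℕ) (g : L) :
    ξ (((LieAlgebra.ad k L c) ^ n) g) =
      ∑ i ∈ Finset.range n, ((LieAlgebra.ad k L c) ^ i) ⁅ξ c, ((LieAlgebra.ad k L c) ^ (n - 1 - i)) g⁆
      + ((LieAlgebra.ad k L c) ^ n) (ξ g) - ((n : k) * lam) • ((LieAlgebra.ad k L c) ^ n) g := by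
  induction n generalizing g with
  | zero => simp
  | succ n ih =>
    have hE : ∀ m ∈ Finset.range n, ((LieAlgebra.ad k L c) ^ (n - 1 - m)) (LieAlgebra.ad k L c g)
        = ((LieAlgebra.ad k L c) ^ (n - m)) g := by
      intro m hm
      have := Finset.mem_range.1 hm
      have h1 : n - m = (n - 1 - m) + 1 := by omega
      rw [h1, pow_succ, Module.End.mul_apply]
    rw [pow_succ, Module.End.mul_apply, ih, Finset.sum_range_succ,
      Finset.sum_congr rfl (fun m hm => by rw [hE m hm])]
    simp only [Nat.add_sub_cancel, Nat.sub_self, pow_zero, Module.End.one_apply, Module.End.mul_apply,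
      LieAlgebra.ad_apply, hξ, map_add, map_sub, map_smul]
    push_cast
    rw [add_mul, add_smul, one_mul]
    abel

theorem aux_conf_comm {k L : Type*} [Field k] [LieRing L] [LieAlgebra k L] {p : ℕ} (hp : p.Prime) (hp2 : 2 < p)
    [CharP k p] (lam : k) (ξ d : L →ₗ[k] L)
    (hξ : ∀ x y, ξ ⁅x, y⁆ = ⁅ξ x, y⁆ + ⁅x, ξ y⁆ - lam • ⁅x, y⁆)
    (hd : ∀ x y, d ⁅x, y⁆ = ⁅d x, y⁆ + ⁅x, d y⁆) (c : L) (hdc : d (ξ c) = ξ (d c)) :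
    ξ (((LieAlgebra.ad k L c) ^ (p - 1)) (d c)) - lam • ((LieAlgebra.ad k L c) ^ (p - 1)) (d c)
      = d (((LieAlgebra.ad k L c) ^ (p - 1)) (ξ c)) := by
  rw [aux_conf_pow lam ξ hξ, aux_conf_pow 0 d (by simpa using hd), aux_lieSym hp hp2, hdc]
  have : ((p - 1 : ℕ) : k) = -1 := by
    rw [Nat.cast_sub (by omega)]
    simp
  rw [this]
  simp

theorem aux_center {k L : Type*} [Field k] [LieRing L] [LieAlgebra k L] {p : ℕ} (hp : p.Prime) (hp2 : 2 < p)
    [CharP k p] (lam : k) (ξ : L →ₗ[k] L)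
    (hξ : ∀ x y, ξ ⁅x, y⁆ = ⁅ξ x, y⁆ + ⁅x, ξ y⁆ - lam • ⁅x, y⁆)
    (a s : L) (hs : ∀ g, ⁅s, g⁆ = ((LieAlgebra.ad k L a) ^ p) g) (g : L) :
    ⁅ξ s - lam • s - ((LieAlgebra.ad k L a) ^ (p - 1)) (ξ a), g⁆ = 0 := by
  have h1 := hξ s g
  rw [hs, hs, aux_conf_pow lam ξ hξ, ← hs] at h1
  have h2 := aux_ad_pred (k := k) hp hp2 (LieAlgebra.ad k L a) (LieAlgebra.ad k L (ξ a))
  have h3 : ∀ n, (fun z => LieAlgebra.ad k L a * z - z * LieAlgebra.ad k L a)^[n] (LieAlgebra.ad k L (ξ a))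
      = LieAlgebra.ad k L (((LieAlgebra.ad k L a) ^ n) (ξ a)) := by
    intro n
    induction n with
    | zero => simp
    | succ n ih =>
      rw [Function.iterate_succ_apply', ih, pow_succ', Module.End.mul_apply, LieAlgebra.ad_apply]
      exact LinearMap.ext fun y => by simp
  rw [h3] at h2
  have h4 := LinearMap.congr_fun h2 g
  simp only [LinearMap.sum_apply, Module.End.mul_apply, LieAlgebra.ad_apply] at h4
  rw [← h4] at h1
  simp only [CharP.cast_eq_zero, zero_mul, zero_smul, sub_zero] at h1
  rw [sub_lie, sub_lie, smul_lie, hs g]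
  have h5 : ⁅ξ s, g⁆ = ⁅((LieAlgebra.ad k L a) ^ (p - 1)) (ξ a), g⁆ + lam • ((LieAlgebra.ad k L a) ^ p) g := by
    have : ⁅((LieAlgebra.ad k L a) ^ (p - 1)) (ξ a), g⁆ = ⁅ξ s, g⁆ + ⁅s, ξ g⁆ - lam • ((LieAlgebra.ad k L a) ^ p) g
      - ⁅s, ξ g⁆ := by rw [← h1]; abel
    rw [this]
    abel
  rw [h5]
  abel

open Polynomial TensorProduct in
theorem aux_JJ_conf {k L : Type*} [Field k] [LieRing L] [LieAlgebra k L] {p : ℕ} (hp : p.Prime) (hp2 : 2 < p)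
    [CharP k p] (lam : k) (ξ : L →ₗ[k] L)
    (hξ : ∀ x y, ξ ⁅x, y⁆ = ⁅ξ x, y⁆ + ⁅x, ξ y⁆ - lam • ⁅x, y⁆) (a b : L) :
    ξ (JJ k (fun x y : L => ⁅x, y⁆) p a b) - lam • JJ k (fun x y : L => ⁅x, y⁆) p a b
      = (fun z => ⁅a + b, z⁆)^[p - 1] (ξ (a + b)) - (fun z => ⁅a, z⁆)^[p - 1] (ξ a)
        - (fun z => ⁅b, z⁆)^[p - 1] (ξ b) := by
  let cf : ℕ → (k[X] ⊗[k] L) →ₗ[k] L := fun i =>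
    (TensorProduct.lid k L).toLinearMap ∘ₗ LinearMap.rTensor L (lcoeff k i)
  have cft : ∀ i (f : k[X]) x, cf i (f ⊗ₜ x) = f.coeff i • x := by
    intro i f x
    simp [cf]
  let d : (k[X] ⊗[k] L) →ₗ[k] (k[X] ⊗[k] L) := LinearMap.rTensor L derivative
  let Ξ : (k[X] ⊗[k] L) →ₗ[k] (k[X] ⊗[k] L) := LinearMap.lTensor k[X] ξ
  have la : ∀ x y z : k[X] ⊗[k] L, ⁅x, y + z⁆ = ⁅x, y⁆ + ⁅x, z⁆ := fun x y z => lie_add x y z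
  have al : ∀ x y z : k[X] ⊗[k] L, ⁅x + y, z⁆ = ⁅x, z⁆ + ⁅y, z⁆ := fun x y z => add_lie x y z
  have lz : ∀ x : k[X] ⊗[k] L, ⁅x, (0 : k[X] ⊗[k] L)⁆ = 0 := fun x => lie_zero x
  have zl : ∀ x : k[X] ⊗[k] L, ⁅(0 : k[X] ⊗[k] L), x⁆ = 0 := fun x => zero_lie x
  have hd : ∀ x y, d ⁅x, y⁆ = ⁅d x, y⁆ + ⁅x, d y⁆ := by
    intro x y
    induction x with
    | zero => simp [zl]
    | add x1 x2 h1 h2 => simp only [al, map_add, h1, h2]; abel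
    | tmul f u =>
      induction y with
      | zero => simp [lz]
      | add x1 x2 h1 h2 => simp only [la, map_add, h1, h2]; abel
      | tmul g v => simp [d, derivative_mul, TensorProduct.add_tmul]
  have hΞ : ∀ x y, Ξ ⁅x, y⁆ = ⁅Ξ x, y⁆ + ⁅x, Ξ y⁆ - lam • ⁅x, y⁆ := by
    intro x y
    induction x with
    | zero => simp [zl]
    | add x1 x2 h1 h2 => simp only [al, map_add, h1, h2, smul_add]; abel
    | tmul f u =>
      induction y with
      | zero => simp [lz]
      | add x1 x2 h1 h2 => simp only [la, map_add, h1, h2, smul_add]; abel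
      | tmul g v => simp [Ξ, hξ, TensorProduct.tmul_add, TensorProduct.tmul_sub]
  have cfd : ∀ i x, cf i (d x) = ((i + 1 : ℕ) : k) • cf (i + 1) x := by
    intro i x
    induction x with
    | zero => simp
    | add x1 x2 h1 h2 => simp only [map_add, h1, h2, smul_add]
    | tmul f u => simp [d, cft, coeff_derivative, smul_smul, mul_comm]
  have cfΞ : ∀ i x, cf i (Ξ x) = ξ (cf i x) := by
    intro i x
    induction x with
    | zero => simp
    | add x1 x2 h1 h2 => simp only [map_add, h1, h2]
    | tmul f u => simp [Ξ, cft]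
  set c : k[X] ⊗[k] L := X ⊗ₜ a + 1 ⊗ₜ b with hc
  have cfc : ∀ x, (fun i => cf i ⁅c, x⁆) = TT (fun x y : L => ⁅x, y⁆) a b (fun i => cf i x) := by
    intro x
    ext i
    induction x with
    | zero => cases i <;> simp [TT, lz]
    | add x1 x2 h1 h2 =>
      rw [la, map_add, h1, h2]
      cases i
      · simp [TT]
      · simp [TT]
        abel
    | tmul f u => cases i <;> simp [hc, TT, cft, al]
  have cfc' : ∀ n x, (fun i => cf i (((LieAlgebra.ad k _ c) ^ n) x))
      = (TT (fun x y : L => ⁅x, y⁆) a b)^[n] (fun i => cf i x) := by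
    intro n x
    induction n with
    | zero => simp
    | succ n ih =>
      rw [Function.iterate_succ_apply', ← ih, ← cfc]
      simp [pow_succ']
  have hdc : d c = 1 ⊗ₜ a := by simp [d, hc]
  have hΞc : Ξ c = X ⊗ₜ ξ a + 1 ⊗ₜ ξ b := by simp [Ξ, hc]
  have key := aux_conf_comm hp hp2 lam Ξ d hΞ hd c (by rw [hdc, hΞc]; simp [d, Ξ])
  have hs : (fun i => cf i (d c)) = Pi.single 0 a := by
    ext i
    rw [hdc, cft]
    cases i <;> simp [coeff_one]
  have hJ : ∀ i, (TT (fun x y : L => ⁅x, y⁆) a b)^[p - 1] (Pi.single 0 a) i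
      = cf i (((LieAlgebra.ad k _ c) ^ (p - 1)) (d c)) := by
    intro i
    rw [← hs, ← cfc']
  obtain ⟨-, t2, t3, t4⟩ := aux_TT (M := L) (fun x y : L => ⁅x, y⁆) (fun x y z => add_lie x y z)
    (fun x y z => lie_add x y z) a b (fun i => cf i (Ξ c)) 1 (fun i hi => by
      rw [hΞc]
      simp [cft, coeff_one, coeff_X, hi.ne, (show i ≠ 0 by omega)]) (p - 1)
  rw [← cfc'] at t2 t3 t4
  have hpp : 1 + (p - 1) = p := by omega
  have c0 : cf 0 (Ξ c) = ξ b := by simp [hΞc, cft]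
  have c1 : cf 1 (Ξ c) = ξ a := by simp [hΞc, cft, coeff_one]
  rw [hpp] at t3 t4
  rw [Finset.sum_range_succ (fun i => cf i (Ξ c)), Finset.sum_range_one] at t4
  simp only [c0, c1] at t2 t3 t4
  rw [aux_sum_ends (by omega), t2, t3] at t4
  rw [map_add, add_comm (ξ a), ← t4]
  have : ξ (JJ k (fun x y : L => ⁅x, y⁆) p a b) - lam • JJ k (fun x y : L => ⁅x, y⁆) p a b
      = ∑ i ∈ Finset.range (p - 1), cf (i + 1) (((LieAlgebra.ad k _ c) ^ (p - 1)) (Ξ c)) := by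
    rw [JJ, map_sum, Finset.smul_sum, ← Finset.sum_sub_distrib]
    refine Finset.sum_congr rfl fun i hi => ?_
    have hi := Finset.mem_range.1 hi
    have e := congrArg (cf i) key
    rw [cfd, map_sub, cfΞ, map_smul, ← hJ] at e
    rw [map_smul, smul_comm lam, ← smul_sub, e, smul_smul, inv_mul_cancel₀ (aux_cast_ne i hi), one_smul]
  rw [this]
  abel

theorem aux_he_comm (k : Type*) [Field k] (q : Amb k) : he k * q = q * he k :=
  Polynomial.X_mul

theorem aux_he_pow_comm (k : Type*) [Field k] (n : ℕ) (q : Amb k) : he k ^ n * q = q * he k ^ n :=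
  ((show Commute (he k) q from aux_he_comm k q).pow_left n).eq

theorem aux_he_cancel (k : Type*) [Field k] (q r : Amb k) (h : he k * q = he k * r) : q = r := by
  refine Polynomial.ext fun n => ?_
  have := congrArg (fun z => Polynomial.coeff z (n + 1)) h
  simpa [he] using this

theorem aux_Q_dvd {k A : Type*} [Field k] [Ring A] [Algebra k A] {hA : A} {bra : A → A → A} {u v : A}
    {q : Amb k} {w : A} (h : QEval k hA bra u v q w) : ∃ q', q = he k * q' := by
  induction h with
  | X => exact ⟨_, (aux_he_comm k _).symm⟩
  | Y => exact ⟨_, (aux_he_comm k _).symm⟩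
  | h => exact ⟨1, by simp⟩
  | add _ _ h1 h2 =>
    obtain ⟨a, rfl⟩ := h1
    obtain ⟨b, rfl⟩ := h2
    exact ⟨a + b, by rw [mul_add]⟩
  | smul c _ h1 =>
    obtain ⟨a, rfl⟩ := h1
    exact ⟨c • a, by rw [mul_smul_comm]⟩
  | mul _ _ h1 h2 =>
    obtain ⟨a, rfl⟩ := h1
    exact ⟨_, mul_assoc _ _ _⟩
  | bracket _ _ hc h1 h2 =>
    obtain ⟨a, rfl⟩ := h1
    obtain ⟨b, rfl⟩ := h2
    refine ⟨a * b - b * a, aux_he_cancel k _ _ ?_⟩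
    rw [hc, mul_sub, mul_sub]
    congr 1
    · rw [mul_assoc, ← mul_assoc a, ← aux_he_comm k a, mul_assoc (he k) a b]
    · rw [mul_assoc, ← mul_assoc b, ← aux_he_comm k b, mul_assoc (he k) b a]

/-- the universal bracket on the ambient ring -/
noncomputable def qbr (k : Type*) [Field k] (a b : Amb k) : Amb k := Polynomial.divX (a * b - b * a)

theorem aux_qbr {k : Type*} [Field k] {a : Amb k} (ha : ∃ a', a = he k * a') (b : Amb k) :
    he k * qbr k a b = a * b - b * a := by
  obtain ⟨a', rfl⟩ := ha
  have h := Polynomial.X_mul_divX_add (he k * a' * b - b * (he k * a'))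
  have h0 : (he k * a' * b - b * (he k * a')).coeff 0 = 0 := by
    rw [← mul_assoc b, ← aux_he_comm k b]
    simp [he, mul_assoc]
  rw [h0] at h
  simpa [qbr, he] using h

theorem aux_Q_zero {k A : Type*} [Field k] [Ring A] [Algebra k A] {hA : A} {bra : A → A → A} {u v : A} :
    QEval k hA bra u v 0 0 := by
  have := QEval.smul (0 : k) (QEval.X (k := k) (hA := hA) (bra := bra) (u := u) (v := v))
  simpa using this

theorem aux_Q_bracket {k A : Type*} [Field k] [Ring A] [Algebra k A] {hA : A} {bra : A → A → A} {u v : A}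
    {a b : Amb k} {x y : A} (ha : QEval k hA bra u v a x) (hb : QEval k hA bra u v b y) :
    QEval k hA bra u v (qbr k a b) (bra x y) :=
  QEval.bracket ha hb (aux_qbr (aux_Q_dvd ha) b)

theorem aux_Q_TT {k A : Type*} [Field k] [Ring A] [Algebra k A] {hA : A} {bra : A → A → A} {u v : A}
    {a b : Amb k} {x y : A} (ha : QEval k hA bra u v a x) (hb : QEval k hA bra u v b y) (n i : ℕ) :
    QEval k hA bra u v ((TT (qbr k) a b)^[n] (Pi.single 0 a) i) ((TT bra x y)^[n] (Pi.single 0 x) i) := by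
  induction n generalizing i with
  | zero =>
    cases i with
    | zero => simpa using ha
    | succ i => simpa using aux_Q_zero
  | succ n ih =>
    simp only [Function.iterate_succ_apply']
    cases i with
    | zero => exact aux_Q_bracket hb (ih 0)
    | succ i => exact QEval.add (aux_Q_bracket ha (ih i)) (aux_Q_bracket hb (ih (i + 1)))

theorem aux_Q_JJ {k A : Type*} [Field k] [Ring A] [Algebra k A] {hA : A} {bra : A → A → A} {u v : A}
    {a b : Amb k} {x y : A} (ha : QEval k hA bra u v a x) (hb : QEval k hA bra u v b y) (p : ℕ) :
    QEval k hA bra u v (JJ k (qbr k) p a b) (JJ k bra p x y) := by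
  unfold JJ
  have : ∀ (s : Finset ℕ) (n : ℕ), QEval k hA bra u v
      (∑ i ∈ s, ((i + 1 : ℕ) : k)⁻¹ • (TT (qbr k) a b)^[n] (Pi.single 0 a) i)
      (∑ i ∈ s, ((i + 1 : ℕ) : k)⁻¹ • (TT bra x y)^[n] (Pi.single 0 x) i) := by
    intro s n
    induction s using Finset.induction_on with
    | empty => simpa using aux_Q_zero
    | insert i s hi ih =>
      rw [Finset.sum_insert hi, Finset.sum_insert hi]
      exact QEval.add (QEval.smul _ (aux_Q_TT ha hb n i)) ih
  exact this _ _

theorem aux_he_iter {k : Type*} [Field k] {a : Amb k} (ha : ∃ a', a = he k * a') (n : ℕ) (z : Amb k) :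
    a * (he k ^ n * z) - he k ^ n * z * a = he k ^ (n + 1) * qbr k a z := by
  rw [pow_succ, mul_assoc _ (he k), aux_qbr ha, mul_sub, mul_assoc, ← mul_assoc a, ← aux_he_pow_comm k n a,
    mul_assoc]

theorem aux_he_TT {k : Type*} [Field k] {a b : Amb k} (ha : ∃ a', a = he k * a') (hb : ∃ b', b = he k * b')
    (s : ℕ → Amb k) (n i : ℕ) :
    he k ^ n * (TT (qbr k) a b)^[n] s i = (TT (fun x y => x * y - y * x) a b)^[n] s i := by
  induction n generalizing i with
  | zero => simp
  | succ n ih =>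
    simp only [Function.iterate_succ_apply']
    cases i with
    | zero => simp only [TT]; rw [← ih, aux_he_iter hb]
    | succ i => simp only [TT]; rw [← ih, ← ih, aux_he_iter hb, aux_he_iter ha, mul_add]

theorem aux_Q_L {k A : Type*} [Field k] [Ring A] [Algebra k A] {p : ℕ} (hp : p.Prime) (hp2 : 2 < p) [CharP k p]
    {hA : A} {bra : A → A → A} {u v : A}
    {a b : Amb k} {x y : A} (ha : QEval k hA bra u v a x) (hb : QEval k hA bra u v b y) :
    he k ^ (p - 1) * JJ k (qbr k) p a b = (a + b) ^ p - a ^ p - b ^ p := by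
  rw [aux_jacobson (k := k) hp hp2, JJ, JJ, Finset.mul_sum]
  refine Finset.sum_congr rfl fun i _ => ?_
  rw [mul_smul_comm, aux_he_TT (aux_Q_dvd ha) (aux_Q_dvd hb)]

theorem aux_JJ_zero {k M : Type*} [Field k] [AddCommGroup M] [Module k M] {p : ℕ} (hp2 : 2 < p)
    (m : M → M → M) (h0 : ∀ x, m x 0 = 0) (x y : M) (h1 : m x x = 0) (h2 : m y x = 0) :
    JJ k m p x y = 0 := by
  have hz : TT m x y 0 = 0 := by
    ext i
    cases i <;> simp [TT, h0]
  have h3 : TT m x y (Pi.single 0 x) = 0 := by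
    ext i
    rcases i with _ | _ | i <;> simp [TT, h0, h1, h2]
  have h4 : ∀ n, (TT m x y)^[n + 1] (Pi.single 0 x) = 0 := by
    intro n
    induction n with
    | zero => simpa using h3
    | succ n ih => rw [Function.iterate_succ_apply', ih, hz]
  have hpp : p - 1 = (p - 2) + 1 := by omega
  unfold JJ
  rw [hpp, h4]
  simp

theorem aux_Q_comm {k A : Type*} [Field k] [CommRing A] [Algebra k A] (bra : A → A → A)
    (hbadd : ∀ x y z : A, bra (x + y) z = bra x z + bra y z)
    (hbsmul : ∀ (c : k) (x y : A), bra (c • x) y = c • bra x y)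
    (hbanti : ∀ x y : A, bra x y = - bra y x)
    (hbjac : ∀ x y z : A, bra x (bra y z) = bra (bra x y) z + bra y (bra x z))
    (hbleib : ∀ x y z : A, bra x (y * z) = bra x y * z + y * bra x z)
    (hb0 : ∀ x : A, bra x 0 = 0) (c : A) {q : Amb k} {w : A} (h : QEval k 0 bra c c q w) (z : A)
    (hz : bra c z = 0) : bra w z = 0 := by
  have h0b : ∀ x : A, bra 0 x = 0 := fun x => by rw [hbanti, hb0, neg_zero]
  induction h with
  | X => exact hz
  | Y => exact hz
  | h => exact h0b z
  | add _ _ h1 h2 => rw [hbadd, h1, h2, add_zero]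
  | smul c _ h1 => rw [hbsmul, h1, smul_zero]
  | mul _ _ h1 h2 => rw [hbanti, hbleib, hbanti z, hbanti z, h1, h2]; simp
  | @bracket _ _ _ x y _ _ _ h1 h2 =>
    have := (hbjac x y z).symm
    rw [h2, h1, hb0, hb0, add_zero] at this
    exact this

theorem aux_Q_P {k A : Type*} [Field k] [CommRing A] [Algebra k A]
    {p : ℕ} (hp : p.Prime) (hp2 : 2 < p) [CharP k p] (bra : A → A → A)
    (hbadd : ∀ x y z : A, bra (x + y) z = bra x z + bra y z)
    (hbsmul : ∀ (c : k) (x y : A), bra (c • x) y = c • bra x y)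
    (hbanti : ∀ x y : A, bra x y = - bra y x)
    (hbjac : ∀ x y z : A, bra x (bra y z) = bra (bra x y) z + bra y (bra x z))
    (hbleib : ∀ x y z : A, bra x (y * z) = bra x y * z + y * bra x z)
    (hb0 : ∀ x : A, bra x 0 = 0) (hself : ∀ x : A, bra x x = 0) (c : A) :
    IsPval k p (0 : A) bra c c 0 := by
  have hcomm : ∀ {q r : Amb k} {w z : A}, QEval k 0 bra c c q w → QEval k 0 bra c c r z → bra w z = 0 := by
    intro q r w z h1 h2
    refine aux_Q_comm bra hbadd hbsmul hbanti hbjac hbleib hb0 c h1 z ?_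
    rw [hbanti, aux_Q_comm bra hbadd hbsmul hbanti hbjac hbleib hb0 c h2 c (hself c), neg_zero]
  let Q : Amb k → Prop := fun q => ∃ w, QEval k 0 bra c c q w
  let N : Amb k → Prop := fun q => ∃ r, QEval k 0 bra c c r 0 ∧ he k ^ (p - 1) * r = q
  have Qadd : ∀ {a b}, Q a → Q b → Q (a + b) := fun ⟨_, ha⟩ ⟨_, hb⟩ => ⟨_, ha.add hb⟩
  have Qmul : ∀ {a b}, Q a → Q b → Q (a * b) := fun ⟨_, ha⟩ ⟨_, hb⟩ => ⟨_, ha.mul hb⟩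
  have Qneg : ∀ {a}, Q a → Q (-a) := fun {a} ⟨_, ha⟩ => ⟨_, by simpa using ha.smul (-1 : k)⟩
  have Qpow : ∀ {a}, Q a → ∀ n, Q (a ^ (n + 1)) := by
    intro a ha n
    induction n with
    | zero => simpa using ha
    | succ n ih => rw [pow_succ]; exact Qmul ih ha
  have Qp : ∀ {a}, Q a → Q (a ^ p) := by
    intro a ha
    have := Qpow ha (p - 1)
    rwa [Nat.sub_add_cancel (by omega)] at this
  have Qx : Q (Xe k) := ⟨_, QEval.X⟩
  have Qy : Q (Ye k) := ⟨_, QEval.Y⟩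
  have Qh : Q (he k) := ⟨_, QEval.h⟩
  have Nadd : ∀ {a b}, N a → N b → N (a + b) := fun ⟨_, ha, ea⟩ ⟨_, hb, eb⟩ =>
    ⟨_, by simpa using ha.add hb, by rw [mul_add, ea, eb]⟩
  have Nsmul : ∀ (t : k) {a}, N a → N (t • a) := fun t {_} ⟨_, ha, ea⟩ =>
    ⟨_, by simpa using ha.smul t, by rw [mul_smul_comm, ea]⟩
  have Nneg : ∀ {a}, N a → N (-a) := fun {a} ha => by simpa using Nsmul (-1) ha
  have NmulQ : ∀ {a b}, N a → Q b → N (a * b) := fun ⟨_, ha, ea⟩ ⟨_, hb⟩ =>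
    ⟨_, by simpa using ha.mul hb, by rw [← mul_assoc, ea]⟩
  have QmulN : ∀ {a b}, Q a → N b → N (a * b) := fun {a _} ⟨_, ha⟩ ⟨r, hb, eb⟩ =>
    ⟨a * r, by simpa using ha.mul hb, by rw [← mul_assoc, aux_he_pow_comm, mul_assoc, eb]⟩
  have NL : ∀ {a b}, Q a → Q b → N ((a + b) ^ p - a ^ p - b ^ p) := by
    rintro a b ⟨x, ha⟩ ⟨y, hb⟩
    refine ⟨JJ k (qbr k) p a b, ?_, aux_Q_L hp hp2 ha hb⟩
    have := aux_Q_JJ ha hb p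
    rwa [aux_JJ_zero hp2 bra hb0 x y (hcomm ha ha) (hcomm hb ha)] at this
  have Nh : ∀ {a}, Q a → N (he k ^ p * a) := by
    rintro a ⟨w, ha⟩
    refine ⟨he k * a, by simpa using QEval.h.mul ha, ?_⟩
    rw [← mul_assoc, ← pow_succ, Nat.sub_add_cancel (by omega)]
  have Qbr : ∀ {a b}, Q a → Q b → Q (qbr k a b) := fun ⟨_, ha⟩ ⟨_, hb⟩ => ⟨_, aux_Q_bracket ha hb⟩
  -- powers commute modulo N
  have Ncomm : N (Xe k ^ p * Ye k ^ p - Ye k ^ p * Xe k ^ p) := by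
    rw [← aux_ad_p (k := k) hp hp2]
    have : ∀ n, (fun z => Xe k * z - z * Xe k)^[n] (Ye k ^ p) = he k ^ n * (qbr k (Xe k))^[n] (Ye k ^ p)
        ∧ Q ((qbr k (Xe k))^[n] (Ye k ^ p)) := by
      intro n
      induction n with
      | zero => exact ⟨by simp, Qp Qy⟩
      | succ n ih =>
        simp only [Function.iterate_succ_apply']
        refine ⟨?_, Qbr Qx ih.2⟩
        rw [ih.1]
        exact aux_he_iter (aux_Q_dvd Qx.choose_spec) _ _
    rw [(this p).1]
    exact Nh (this p).2
  set x := Xe k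
  set y := Ye k
  have hB : he k * qbr k x y = x * y - y * x := aux_qbr (aux_Q_dvd Qx.choose_spec) y
  have QB := Qbr Qx Qy
  set B := qbr k x y
  have Q1 : Q ((x + y) * (x + y)) := Qmul (Qadd Qx Qy) (Qadd Qx Qy)
  have Q2 : Q (-(x * x)) := Qneg (Qmul Qx Qx)
  have Q3 : Q (-(y * y)) := Qneg (Qmul Qy Qy)
  have n1 := NL (Qadd (Qadd Q1 Q2) Q3) (Qmul Qh QB)
  have n2 := NL (Qadd Q1 Q2) Q3
  have n3 := NL Q1 Q2
  have n4 := NL Qx Qy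
  have hsum : (x + y) * (x + y) + -(x * x) + -(y * y) + he k * B = (2 : k) • (x * y) := by
    rw [hB, two_smul]
    noncomm_ring
  have hodd := hp.odd_of_ne_two (by omega)
  have h2p : (2 : k) ^ p = 2 := by
    have : Fact p.Prime := ⟨hp⟩
    have := add_pow_char (1 : k) 1 p
    rw [one_pow, one_add_one_eq_two] at this
    exact this
  have h20 : (2 : k) ≠ 0 := by
    have := aux_cast_ne (k := k) (p := p) 1 (by omega)
    simpa using this
  have hhB : (he k * B) ^ p = he k ^ p * B ^ p :=
    (show Commute (he k) B from aux_he_comm k B).mul_pow p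
  have sqp : ∀ a : Amb k, (a * a) ^ p = a ^ p * a ^ p := fun a => (Commute.refl a).mul_pow p
  rw [hsum, smul_pow, h2p, hhB] at n1
  have negp : ∀ a : Amb k, (-a) ^ p = -a ^ p := fun a => hodd.neg_pow a
  rw [negp, sqp] at n2 n3
  rw [sqp] at n3
  have n5 := Nh (Qp QB)
  have n6 := NmulQ n4 (Qp (Qadd Qx Qy))
  have n7 := QmulN (Qadd (Qp Qx) (Qp Qy)) n4
  have n8 := Nadd (Nadd (Nadd (Nadd (Nadd (Nadd n1 n2) n3) n5) n6) n7) (Nneg Ncomm)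
  have n9 := Nsmul (2 : k)⁻¹ n8
  have fin : (2 : k)⁻¹ • ((2 : k) • ((x * y) ^ p - x ^ p * y ^ p)) = (x * y) ^ p - x ^ p * y ^ p := by
    rw [smul_smul, inv_mul_cancel₀ h20, one_smul]
  have n10 : N ((x * y) ^ p - x ^ p * y ^ p) := by
    rw [← fin]
    convert n9 using 2
    rw [two_smul, two_smul]
    generalize (x + y) ^ p = u
    generalize ((x + y) * (x + y) + -(x * x)) ^ p = u1
    generalize ((x + y) * (x + y) + -(x * x) + -(y * y)) ^ p = u2
    generalize (x * y) ^ p = u3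
    generalize x ^ p = v1
    generalize y ^ p = v2
    simp only [sub_mul, mul_sub, mul_add, add_mul]
    abel
  obtain ⟨r, hr, er⟩ := n10
  exact ⟨r, er, hr⟩

theorem aux_addpow {k A : Type*} [Field k] [CommRing A] [Algebra k A]
    {p : ℕ} (hp : p.Prime) (hp2 : 2 < p) [CharP k p] (a b : A) : (a + b) ^ p = a ^ p + b ^ p := by
  have h := aux_jacobson (k := k) hp hp2 a b
  rw [aux_JJ_zero hp2 _ (by simp) a b (by simp) (by simp [mul_comm])] at h
  linear_combination h

/-- Let `A` be a restricted Poisson algebra over a field `k` of characteristic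
`p > 2`, and let `ξ` be a conformal derivation of weight `λ`:
`ξ{x,y} = {ξx, y} + {x, ξy} - λ{x,y}`.  Then
`κ(a) = (ξ - λ·id)(a^[p]) - (ad a)^(p-1)(ξ a)` is additive, satisfies
`κ(ab) = a^p κ(b) + b^p κ(a)`, and takes values in the Poisson center. -/
theorem statement7 {k A : Type*} [Field k] [CommRing A] [Algebra k A]
    {p : ℕ} (hp : p.Prime) (hp2 : 2 < p) [CharP k p]
    (bra : A → A → A)
    -- Poisson algebra axioms for the bracket
    (hbadd : ∀ x y z : A, bra (x + y) z = bra x z + bra y z)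
    (hbsmul : ∀ (c : k) (x y : A), bra (c • x) y = c • bra x y)
    (hbanti : ∀ x y : A, bra x y = - bra y x)
    (hbjac : ∀ x y z : A, bra x (bra y z) = bra (bra x y) z + bra y (bra x z))
    (hbleib : ∀ x y z : A, bra x (y * z) = bra x y * z + y * bra x z)
    -- the restricted structure x ↦ pf x = x^[p]
    (pf : A → A)
    (hres1 : ∀ x y : A, bra (pf x) y = (fun z => bra x z)^[p] y)
    (hres2 : ∀ (c : k) (x : A), pf (c • x) = c ^ p • pf x)
    (hresL : ∀ x y w : A, IsLval k p (0 : A) bra x y w →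
      pf (x + y) = pf x + pf y + w)
    (hresP : ∀ x y w : A, IsPval k p (0 : A) bra x y w →
      pf (x * y) = x ^ p * pf y + pf x * y ^ p + w)
    -- the conformal derivation ξ of weight lam
    (lam : k) (ξ : A → A)
    (hξadd : ∀ x y : A, ξ (x + y) = ξ x + ξ y)
    (hξsmul : ∀ (c : k) (x : A), ξ (c • x) = c • ξ x)
    (hξmul : ∀ x y : A, ξ (x * y) = ξ x * y + x * ξ y)
    (hconf : ∀ x y : A, ξ (bra x y) = bra (ξ x) y + bra x (ξ y) - lam • bra x y) :
    -- κ(a) := (ξ - λ·id)(a^[p]) - (ad a)^(p-1)(ξ a)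
    (∀ a b : A,
        (ξ (pf (a + b)) - lam • pf (a + b) - (fun z => bra (a + b) z)^[p - 1] (ξ (a + b)))
          = (ξ (pf a) - lam • pf a - (fun z => bra a z)^[p - 1] (ξ a))
            + (ξ (pf b) - lam • pf b - (fun z => bra b z)^[p - 1] (ξ b))) ∧
    (∀ a b : A,
        (ξ (pf (a * b)) - lam • pf (a * b) - (fun z => bra (a * b) z)^[p - 1] (ξ (a * b)))
          = a ^ p * (ξ (pf b) - lam • pf b - (fun z => bra b z)^[p - 1] (ξ b))
            + b ^ p * (ξ (pf a) - lam • pf a - (fun z => bra a z)^[p - 1] (ξ a))) ∧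
    (∀ a g : A,
        bra (ξ (pf a) - lam • pf a - (fun z => bra a z)^[p - 1] (ξ a)) g = 0) := by
  have hba : ∀ x y z : A, bra x (y + z) = bra x y + bra x z := by
    intro x y z
    rw [hbanti, hbadd, hbanti y, hbanti z]
    abel
  have hb0 : ∀ x : A, bra x 0 = 0 := fun x => by
    have := hba x 0 0
    simpa using this
  have h20 : (2 : k) ≠ 0 := by
    have := aux_cast_ne (k := k) (p := p) 1 (by omega)
    simpa using this
  have hhalf : ∀ x y : A, x + x = y + y → x = y := by
    intro x y h
    have h' : (2 : k) • x = (2 : k) • y := by rw [two_smul, two_smul, h]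
    have h3 := congrArg (fun z => (2:k)⁻¹ • z) h'
    simpa [smul_smul, h20] using h3
  have hself : ∀ x : A, bra x x = 0 := by
    intro x
    apply hhalf
    rw [add_zero]
    exact eq_neg_iff_add_eq_zero.1 (hbanti x x)
  have hJ : ∀ a b : A, ξ (JJ k bra p a b) - lam • JJ k bra p a b
      = (fun z => bra (a + b) z)^[p - 1] (ξ (a + b)) - (fun z => bra a z)^[p - 1] (ξ a)
        - (fun z => bra b z)^[p - 1] (ξ b) := by
    intro a b
    letI iL : LieRing A :=
      { (inferInstance : AddCommGroup A) with
        bracket := bra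
        add_lie := hbadd
        lie_add := hba
        lie_self := hself
        leibniz_lie := hbjac }
    letI iLA : @LieAlgebra k A _ iL :=
      @LieAlgebra.mk k A _ iL (inferInstance : Module k A) (fun c x y => by
        change bra x (c • y) = c • bra x y
        rw [hbanti, hbsmul, hbanti x, smul_neg])
    let ξl : A →ₗ[k] A := { toFun := ξ, map_add' := hξadd, map_smul' := hξsmul }
    exact @aux_JJ_conf k A _ iL iLA p hp hp2 _ lam ξl hconf a b
  have hpfadd : ∀ a b, pf (a + b) = pf a + pf b + JJ k bra p a b := fun a b =>
    hresL a b _ ⟨_, aux_Q_L hp hp2 (QEval.X (k := k) (hA := 0) (bra := bra) (u := a) (v := b)) QEval.Y,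
      aux_Q_JJ QEval.X QEval.Y p⟩
  have hadd : ∀ a b : A,
        (ξ (pf (a + b)) - lam • pf (a + b) - (fun z => bra (a + b) z)^[p - 1] (ξ (a + b)))
          = (ξ (pf a) - lam • pf a - (fun z => bra a z)^[p - 1] (ξ a))
            + (ξ (pf b) - lam • pf b - (fun z => bra b z)^[p - 1] (ξ b)) := by
    intro a b
    have h := hJ a b
    rw [hpfadd, hξadd, hξadd, smul_add, smul_add]
    linear_combination h
  refine ⟨hadd, ?_, ?_⟩
  · have hsq : ∀ c, pf (c * c) = c ^ p * pf c + pf c * c ^ p := fun c => by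
      have := hresP c c 0 (aux_Q_P hp hp2 bra hbadd hbsmul hbanti hbjac hbleib hb0 hself c)
      rwa [add_zero] at this
    have hpA : (p : A) = 0 := by
      rw [← map_natCast (algebraMap k A), CharP.cast_eq_zero, map_zero]
    have hξpow : ∀ (c : A) (n : ℕ), ξ (c ^ (n + 1)) = ((n + 1 : ℕ) : A) * c ^ n * ξ c := by
      intro c n
      induction n with
      | zero => simp
      | succ n ih =>
        rw [pow_succ, hξmul, ih]
        push_cast
        ring
    have hξp : ∀ c : A, ξ (c ^ p) = 0 := by
      intro c
      have := hξpow c (p - 1)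
      rw [Nat.sub_add_cancel (by omega), hpA] at this
      simpa using this
    have h2pA : (2 : A) ^ (p - 1) = 1 := by
      have hf : Fact p.Prime := ⟨hp⟩
      have h2p := add_pow_char (1 : k) 1 p
      rw [one_pow, one_add_one_eq_two] at h2p
      have h3 : (2 : k) ^ (p - 1) = 1 := by
        have h4 : (2 : k) ^ (p - 1) * 2 = 1 * 2 := by
          rw [← pow_succ, Nat.sub_add_cancel (by omega), h2p, one_mul]
        exact mul_right_cancel₀ h20 h4
      have := congrArg (algebraMap k A) h3
      rw [map_pow, map_one, map_ofNat] at this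
      exact this
    have hit : ∀ (c u : A) (n : ℕ), (fun z => bra (c * c) z)^[n] (c * u)
        = 2 ^ n * c ^ (n + 1) * (fun z => bra c z)^[n] u := by
      intro c u n
      induction n with
      | zero => simp
      | succ n ih =>
        have hcp' : bra c (2 ^ n * c ^ (n + 1)) = 0 := by
          have h1 : bra c 1 = 0 := by
            have := hbleib c 1 1
            simpa using this
          have h2 : ∀ m : ℕ, bra c (2 ^ m) = 0 := by
            intro m
            induction m with
            | zero => simpa using h1
            | succ m ih =>
              rw [pow_succ, hbleib, ih, ← one_add_one_eq_two, hba, h1]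
              simp
          have h3 : ∀ m : ℕ, bra c (c ^ m) = 0 := by
            intro m
            induction m with
            | zero => simpa using h1
            | succ m ih =>
              rw [pow_succ, hbleib, ih, hself]
              simp
          rw [hbleib, h2, h3]
          simp
        have hcc : ∀ z, bra (c * c) z = 2 * c * bra c z := by
          intro z
          rw [hbanti, hbleib, hbanti z c]
          ring
        rw [Function.iterate_succ_apply', Function.iterate_succ_apply', ih]
        rw [hcc, hbleib, hcp']
        ring
    have hsqk : ∀ c : A,
        (ξ (pf (c * c)) - lam • pf (c * c) - (fun z => bra (c * c) z)^[p - 1] (ξ (c * c)))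
        = 2 * c ^ p * (ξ (pf c) - lam • pf c - (fun z => bra c z)^[p - 1] (ξ c)) := by
      intro c
      have e1 : ξ (c * c) = c * (ξ c + ξ c) := by rw [hξmul]; ring
      have e2 : ∀ n, (fun z => bra c z)^[n] (ξ c + ξ c)
          = (fun z => bra c z)^[n] (ξ c) + (fun z => bra c z)^[n] (ξ c) := by
        intro n
        induction n with
        | zero => simp
        | succ n ih => simp only [Function.iterate_succ_apply', ih, hba]
      rw [e1, hit, e2, h2pA, Nat.sub_add_cancel (by omega), hsq, hξadd, hξmul, hξmul, hξp,
        smul_add, ← mul_smul_comm, ← smul_mul_assoc]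
      ring
    intro a b
    have hf : Fact p.Prime := ⟨hp⟩
    have hap : (a + b) ^ p = a ^ p + b ^ p := by
      rw [aux_addpow hp hp2 (k := k)]
    have s1 := hsqk (a + b)
    have s2 : (a + b) * (a + b) = (a * a + b * b) + (a * b + a * b) := by ring
    rw [hadd a b, s2, hadd, hadd (a * a), hadd (a * b), hsqk a, hsqk b, hap] at s1
    apply hhalf
    linear_combination s1
  · intro a g
    letI iL : LieRing A :=
      { (inferInstance : AddCommGroup A) with
        bracket := bra
        add_lie := hbadd
        lie_add := hba
        lie_self := hself
        leibniz_lie := hbjac }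
    letI iLA : @LieAlgebra k A _ iL :=
      @LieAlgebra.mk k A _ iL (inferInstance : Module k A) (fun c x y => by
        change bra x (c • y) = c • bra x y
        rw [hbanti, hbsmul, hbanti x, smul_neg])
    let ξl : A →ₗ[k] A := { toFun := ξ, map_add' := hξadd, map_smul' := hξsmul }
    have := @aux_center k A _ iL iLA p hp hp2 _ lam ξl hconf a (pf a) (fun g => by
      rw [Module.End.pow_apply]
      exact hres1 a g) g
    rw [Module.End.pow_apply] at this
    exact this
end

section
/- Let A be a restricted quantized algebra over a field k of characteristic p > 2 (an associative k[[h]]-algebra with bracket {−,−} satisfying h{a,b} = ab − ba, equipped with a restricted operation x ↦ x^{[p]} satisfying h^{[p]} = h and (xy)^{[p]} = x^p y^{[p]} + x^{[p]} y^p − h^{p-1} x^{[p]} y^{[p]} + P(x,y)). Then for every x ∈ A, (hx)^{[p]} = h x^p. -/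
section Helpers
open Polynomial

lemma choose_pred_char {R : Type*} [Ring R] {p : ℕ} (hp : p.Prime) [CharP R p] (m : ℕ)
    (hm : m < p) : (((p - 1).choose m : ℕ) : R) = (-1) ^ m := by
  induction m with
  | zero => simp
  | succ m ih =>
    have h1 := ih (by omega)
    have h2 : (p.choose (m + 1) : R) = 0 := by
      rw [CharP.cast_eq_zero_iff R p]
      exact hp.dvd_choose_self (by omega) hm
    have h3 : p = (p - 1) + 1 := by omega
    rw [h3, Nat.choose_succ_succ, Nat.cast_add, h1] at h2
    rw [pow_succ, mul_neg_one]
    exact (neg_eq_of_add_eq_zero_right h2).symm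

lemma sub_pow_pred {R : Type*} [Ring R] {p : ℕ} (hp : p.Prime) [CharP R p] (x y : R)
    (hxy : Commute x y) :
    (x - y) ^ (p - 1) = ∑ i ∈ Finset.range p, x ^ i * y ^ (p - 1 - i) := by
  rw [sub_eq_add_neg, (hxy.neg_right).add_pow]
  have h3 : p - 1 + 1 = p := by have := hp.pos; omega
  rw [h3]
  refine Finset.sum_congr rfl fun i hi => ?_
  have hi := Finset.mem_range.1 hi
  have h1 : (p - 1).choose i = (p - 1).choose (p - 1 - i) := (Nat.choose_symm (by omega)).symm
  rw [h1, choose_pred_char hp _ (by omega), mul_assoc]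
  congr 1
  rw [neg_pow, ((Commute.neg_one_left (y ^ (p-1-i))).pow_left _).eq, mul_assoc, ← pow_add, ← two_mul, pow_mul]
  simp

lemma adpow_pred {k R : Type*} [Field k] [Ring R] [Algebra k R] {p : ℕ} (hp : p.Prime)
    [CharP k p] [Nontrivial R] (f g : R) :
    ((LinearMap.mulLeft k f - LinearMap.mulRight k f) ^ (p - 1)) g =
      ∑ i ∈ Finset.range p, f ^ i * (g * f ^ (p - 1 - i)) := by
  have : CharP (Module.End k R) p := charP_of_injective_algebraMap' k p
  rw [sub_pow_pred hp _ _ (LinearMap.commute_mulLeft_right f f), LinearMap.sum_apply]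
  simp [LinearMap.pow_mulLeft, LinearMap.pow_mulRight]

lemma adpow_p {k R : Type*} [Field k] [Ring R] [Algebra k R] {p : ℕ} (hp : p.Prime)
    [CharP k p] [Nontrivial R] (f g : R) :
    ((LinearMap.mulLeft k f - LinearMap.mulRight k f) ^ p) g = f ^ p * g - g * f ^ p := by
  have : CharP (Module.End k R) p := charP_of_injective_algebraMap' k p
  have : Fact p.Prime := ⟨hp⟩
  rw [sub_pow_char_of_commute _ (LinearMap.commute_mulLeft_right f f)]
  simp [LinearMap.pow_mulLeft, LinearMap.pow_mulRight]

lemma deriv_pow_nc {R : Type*} [Ring R] (f : R[X]) (n : ℕ) :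
    derivative (f ^ n) =
      ∑ i ∈ Finset.range n, f ^ i * (derivative f * f ^ (n - 1 - i)) := by
  induction n with
  | zero => simp
  | succ n ih =>
    rw [pow_succ', derivative_mul, ih, Finset.sum_range_succ', Finset.mul_sum, add_comm]
    congr 1
    · refine Finset.sum_congr rfl fun i hi => ?_
      have hi := Finset.mem_range.1 hi
      rw [pow_succ', mul_assoc, show n + 1 - 1 - (i + 1) = n - 1 - i by omega]
    · simp

section Abs
variable {k R : Type*} [Field k] [Ring R] [Algebra k R] (S : Submodule k R) (t : R)

def MM (n : ℕ) : Submodule k R := S.map (LinearMap.mulLeft k (t ^ n))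

lemma mem_MM {n : ℕ} {q : R} : q ∈ MM S t n ↔ ∃ r ∈ S, t ^ n * r = q := by
  simp [MM]

variable (hc : ∀ r, Commute t r) (ht : t ∈ S) (hm : ∀ a ∈ S, ∀ b ∈ S, a * b ∈ S)
  (hb : ∀ a ∈ S, ∀ b ∈ S, ∃ c ∈ S, t * c = a * b - b * a)

include hb hc in
lemma MM_comm {n : ℕ} {a q : R} (ha : a ∈ S) (hq : q ∈ MM S t n) :
    a * q - q * a ∈ MM S t (n + 1) := by
  obtain ⟨r, hr, rfl⟩ := (mem_MM S t).1 hq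
  obtain ⟨c, hcS, h⟩ := hb a ha r hr
  refine (mem_MM S t).2 ⟨c, hcS, ?_⟩
  rw [pow_succ, mul_assoc, h, mul_sub, ← mul_assoc, ((hc a).pow_left n).eq]
  simp [mul_assoc]

include hm in
lemma MM_mul_right {n : ℕ} {a q : R} (ha : a ∈ S) (hq : q ∈ MM S t n) : q * a ∈ MM S t n := by
  obtain ⟨r, hr, rfl⟩ := (mem_MM S t).1 hq
  exact (mem_MM S t).2 ⟨r * a, hm _ hr _ ha, by rw [mul_assoc]⟩

include hm hc in
lemma MM_mul_left {n : ℕ} {a q : R} (ha : a ∈ S) (hq : q ∈ MM S t n) : a * q ∈ MM S t n := by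
  obtain ⟨r, hr, rfl⟩ := (mem_MM S t).1 hq
  exact (mem_MM S t).2 ⟨a * r, hm _ ha _ hr, by
    rw [← mul_assoc, ← mul_assoc, ((hc a).pow_left n).eq]⟩

include ht hm in
lemma MM_anti {n : ℕ} {q : R} (hq : q ∈ MM S t (n + 1)) : q ∈ MM S t n := by
  obtain ⟨r, hr, rfl⟩ := (mem_MM S t).1 hq
  exact (mem_MM S t).2 ⟨t * r, hm _ ht _ hr, by rw [pow_succ, mul_assoc]⟩

include hm in
lemma S_pow {a : R} (ha : a ∈ S) {n : ℕ} (hn : 0 < n) : a ^ n ∈ S := by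
  induction n, hn using Nat.le_induction with
  | base => simpa
  | succ n _ ih => rw [pow_succ]; exact hm _ ih _ ha

include hb hc in
lemma ad_coeff {a b : R} (ha : a ∈ S) (hbS : b ∈ S) (n : ℕ) (G : R[X])
    (hG : ∀ i, G.coeff i ∈ S) (i : ℕ) :
    (((LinearMap.mulLeft k (C a * X + C b : R[X]) - LinearMap.mulRight k (C a * X + C b : R[X])) ^ n :
      Module.End k R[X]) G).coeff i
      ∈ MM S t n := by
  induction n generalizing i with
  | zero => simpa [MM] using hG i
  | succ n ih =>
    rw [pow_succ', Module.End.mul_apply]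
    generalize ((LinearMap.mulLeft k (C a * X + C b : R[X]) -
      LinearMap.mulRight k (C a * X + C b : R[X])) ^ n : Module.End k R[X]) G = F at ih ⊢
    simp only [LinearMap.sub_apply, LinearMap.mulLeft_apply, LinearMap.mulRight_apply]
    have h2 := MM_comm S t hc hb hbS (ih i)
    cases i with
    | zero => simpa [add_mul, mul_add, mul_assoc, X_mul, ← mul_assoc] using h2
    | succ i =>
      have h1 := MM_comm S t hc hb ha (ih i)
      have := add_mem h1 h2
      have e : ((C a * X + C b) * F - F * (C a * X + C b)).coeff (i+1) =
        a * F.coeff i - F.coeff i * a + (b * F.coeff (i+1) - F.coeff (i+1) * b) := by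
        have e1 : C a * X * F = C a * (F * X) := by rw [mul_assoc, X_mul]
        have e2 : F * (C a * X) = (F * C a) * X := by rw [mul_assoc]
        rw [add_mul, mul_add, e1, e2]
        simp only [coeff_sub, coeff_add, coeff_C_mul, coeff_mul_X, coeff_mul_C]
        abel
      rw [e]; exact this

include hb hc in
lemma jacobson_mem [Nontrivial R] {p : ℕ} (hp : p.Prime) [CharP k p] {a b : R}
    (ha : a ∈ S) (hbS : b ∈ S) :
    (a + b) ^ p - a ^ p - b ^ p ∈ MM S t (p - 1) := by
  set f : R[X] := C a * X + C b with hf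
  have hder : ∀ i, (derivative (f ^ p)).coeff i ∈ MM S t (p - 1) := by
    intro i
    rw [deriv_pow_nc, ← adpow_pred (k := k) hp]
    apply ad_coeff S t hc hb ha hbS
    intro j
    simp only [hf, derivative_add, derivative_mul, derivative_C, derivative_X]
    simp only [zero_mul, mul_one, zero_add, add_zero, coeff_C]
    split_ifs
    · exact ha
    · exact S.zero_mem
  have hco : ∀ i, i + 1 < p → (f ^ p).coeff (i + 1) ∈ MM S t (p - 1) := by
    intro i hi
    have h1 := hder i
    rw [coeff_derivative] at h1
    have hne : ((i + 1 : ℕ) : k) ≠ 0 := by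
      rw [Ne, CharP.cast_eq_zero_iff k p]
      exact Nat.not_dvd_of_pos_of_lt (by omega) hi
    have h2 := (MM S t (p - 1)).smul_mem (((i + 1 : ℕ) : k)⁻¹) h1
    have h3 : (f ^ p).coeff (i + 1) * ((i : R) + 1) =
        ((i + 1 : ℕ) : k) • (f ^ p).coeff (i + 1) := by
      rw [Nat.cast_smul_eq_nsmul, nsmul_eq_mul, Nat.cast_comm]; push_cast; rfl
    rwa [h3, smul_smul, inv_mul_cancel₀ hne, one_smul] at h2
  have hdeg : f.natDegree ≤ 1 := natDegree_linear_le
  have hdegp : (f ^ p).natDegree < p + 1 := by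
    have := natDegree_pow_le_of_le p hdeg
    omega
  have h0 : (f ^ p).coeff 0 = b ^ p := by
    have := map_pow (constantCoeff (R := R)) f p
    simpa [hf] using this
  have hpp : (f ^ p).coeff p = a ^ p := by
    have := coeff_pow_of_natDegree_le (m := p) hdeg
    simpa [hf] using this
  have hev : (f ^ p).eval 1 = (a + b) ^ p := by
    have := map_pow (eval₂RingHom' (RingHom.id R) 1 (fun a => Commute.one_right _)) f p
    have e : (eval₂RingHom' (RingHom.id R) 1 (fun a => Commute.one_right _)) f = a + b := by
      simp [hf]
    rw [e] at this
    exact this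
  rw [eval_eq_sum_range' hdegp] at hev
  obtain ⟨m, rfl⟩ : ∃ m, p = m + 1 := ⟨p - 1, by have := hp.pos; omega⟩
  rw [Finset.sum_range_succ, Finset.sum_range_succ', h0, hpp] at hev
  simp only [one_pow, mul_one] at hev
  have : (a + b) ^ (m + 1) - a ^ (m + 1) - b ^ (m + 1) =
      ∑ i ∈ Finset.range m, (f ^ (m+1)).coeff (i + 1) := by
    rw [← hev]; abel
  rw [this]
  refine Submodule.sum_mem _ fun i hi => hco i ?_
  have := Finset.mem_range.1 hi
  omega

include hb hc ht hm in
lemma prodP_mem [Nontrivial R] {p : ℕ} (hp : p.Prime) (hp2 : 2 < p) [CharP k p] {x y : R}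
    (hx : x ∈ S) (hy : y ∈ S) :
    (x * y) ^ p - x ^ p * y ^ p ∈ MM S t (p - 1) := by
  have hp0 := hp.pos
  have J : ∀ a ∈ S, ∀ b ∈ S, (a + b) ^ p - a ^ p - b ^ p ∈ MM S t (p - 1) :=
    fun a ha b hb' => jacobson_mem S t hc hb hp ha hb'
  have hxp := S_pow S hm hx hp0
  have hyp := S_pow S hm hy hp0
  have hxy := hm _ hx _ hy
  have hyx := hm _ hy _ hx
  have hs := S.add_mem hx hy
  have hsp := S_pow S hm hs hp0
  have hpS : ∀ a ∈ MM S t (p-1), a ∈ S := by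
    intro a ha
    obtain ⟨r, hr, rfl⟩ := (mem_MM S t).1 ha
    exact hm _ (S_pow S hm ht (by omega)) _ hr
  obtain ⟨c, hcS, hceq⟩ := hb x hx y hy
  -- x y + x y = (x+y)^2 - x^2 - y^2 + t c
  have A1 := J _ hxy _ hxy
  have hkey : (x + y) * (x + y) + t * c = x * x + y * y + (x * y + x * y) := by
    rw [hceq]; noncomm_ring
  have hxx := hm _ hx _ hx
  have hyy := hm _ hy _ hy
  have hss := hm _ hs _ hs
  have htc := hm _ ht _ hcS
  have A2 := J _ hss _ htc
  rw [hkey] at A2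
  have A3 := J _ (S.add_mem hxx hyy) _ (S.add_mem hxy hxy)
  have A4 := J _ hxx _ hyy
  have A5 : (t * c) ^ p ∈ MM S t (p - 1) := by
    apply MM_anti S t ht hm
    rw [show p - 1 + 1 = p by omega, (hc c).mul_pow]
    exact (mem_MM S t).2 ⟨c ^ p, S_pow S hm hcS hp0, rfl⟩
  have A6 := J _ hx _ hy
  have sq : ∀ z : R, (z * z) ^ p = z ^ p * z ^ p := fun z => (Commute.refl z).mul_pow p
  have A7 : (x + y) ^ p * (x + y) ^ p - (x ^ p + y ^ p) * (x ^ p + y ^ p) ∈ MM S t (p - 1) := by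
    have e : (x + y) ^ p * (x + y) ^ p - (x ^ p + y ^ p) * (x ^ p + y ^ p) =
      ((x + y) ^ p - x ^ p - y ^ p) * (x + y) ^ p +
        (x ^ p + y ^ p) * ((x + y) ^ p - x ^ p - y ^ p) := by noncomm_ring
    rw [e]
    exact add_mem (MM_mul_right S t hm hsp A6)
      (MM_mul_left S t hc hm (S.add_mem hxp hyp) A6)
  have A8 : x ^ p * y ^ p - y ^ p * x ^ p ∈ MM S t (p - 1) := by
    rw [← adpow_p (k := k) hp]
    have : ∀ n, ((LinearMap.mulLeft k x - LinearMap.mulRight k x) ^ n) (y ^ p) ∈ MM S t n := by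
      intro n
      induction n with
      | zero => simpa [MM] using hyp
      | succ n ih =>
        rw [pow_succ', Module.End.mul_apply]
        exact MM_comm S t hc hb hx ih
    apply MM_anti S t ht hm
    have := this p
    rwa [show p - 1 + 1 = p by omega]
  rw [sq x, sq y] at A4
  rw [sq (x + y)] at A2
  have key : (2 : k) • ((x * y) ^ p - x ^ p * y ^ p) ∈ MM S t (p - 1) := by
    have e : (2 : k) • ((x * y) ^ p - x ^ p * y ^ p) =
      -((x * y + x * y) ^ p - (x * y) ^ p - (x * y) ^ p)
      - ((x * x + y * y + (x * y + x * y)) ^ p - (x * x + y * y) ^ p - (x * y + x * y) ^ p)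
      + ((x * x + y * y + (x * y + x * y)) ^ p - (x + y) ^ p * (x + y) ^ p - (t * c) ^ p)
      - ((x * x + y * y) ^ p - x ^ p * x ^ p - y ^ p * y ^ p)
      + (t * c) ^ p
      + ((x + y) ^ p * (x + y) ^ p - (x ^ p + y ^ p) * (x ^ p + y ^ p))
      - (x ^ p * y ^ p - y ^ p * x ^ p) := by
      rw [two_smul]
      simp only [add_mul, mul_add]
      abel
    rw [e]
    exact sub_mem (add_mem (add_mem (sub_mem (add_mem (sub_mem (neg_mem A1) A3) A2) A4) A5) A7) A8
  have h2 : (2 : k) ≠ 0 := by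
    have : ((2 : ℕ) : k) ≠ 0 := by
      rw [Ne, CharP.cast_eq_zero_iff k p]
      exact Nat.not_dvd_of_pos_of_lt (by omega) hp2
    exact_mod_cast this
  have := (MM S t (p - 1)).smul_mem ((2 : k)⁻¹) key
  rwa [smul_smul, inv_mul_cancel₀ h2, one_smul] at this

end Abs

lemma he_comm (k : Type*) [Field k] (r : Amb k) : Commute (he k) r := Polynomial.X_mul

lemma he_cancel (k : Type*) [Field k] (n : ℕ) {a b : Amb k} (e : he k ^ n * a = he k ^ n * b) :
    a = b := by
  ext i : 1
  have := congrArg (fun q => Polynomial.coeff q (i + n)) e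
  simpa [he, Polynomial.coeff_X_pow_mul] using this

lemma QEval_dvd {k A : Type*} [Field k] [Ring A] [Algebra k A] {hA : A} {bra : A → A → A}
    {u v : A} {q : Amb k} {w : A} (H : QEval k hA bra u v q w) : ∃ r, q = he k * r := by
  induction H with
  | X => exact ⟨C _, (Polynomial.X_mul).symm⟩
  | Y => exact ⟨C _, (Polynomial.X_mul).symm⟩
  | h => exact ⟨1, (mul_one _).symm⟩
  | add _ _ h1 h2 =>
    obtain ⟨r, rfl⟩ := h1
    obtain ⟨s, rfl⟩ := h2
    exact ⟨r + s, by rw [mul_add]⟩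
  | smul c _ h1 =>
    obtain ⟨r, rfl⟩ := h1
    exact ⟨c • r, by simp⟩
  | mul _ _ h1 h2 =>
    obtain ⟨r, rfl⟩ := h1
    exact ⟨_, mul_assoc _ _ _⟩
  | bracket _ _ e h1 h2 =>
    obtain ⟨r, rfl⟩ := h1
    obtain ⟨s, rfl⟩ := h2
    refine ⟨r * s - s * r, he_cancel k 1 ?_⟩
    rw [pow_one, e, mul_sub, mul_sub]
    congr 1
    · rw [mul_assoc, ← mul_assoc r, ← (he_comm k r).eq, mul_assoc]
    · rw [mul_assoc, ← mul_assoc s, ← (he_comm k s).eq, mul_assoc]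

def QS (k : Type*) {A : Type*} [Field k] [Ring A] [Algebra k A] (hA : A) (bra : A → A → A)
    (u v : A) : Submodule k (Amb k) where
  carrier := {q | ∃ w, QEval k hA bra u v q w}
  add_mem' := by
    rintro a b ⟨x, hx⟩ ⟨y, hy⟩
    exact ⟨_, hx.add hy⟩
  zero_mem' := ⟨_, by simpa using QEval.smul (0 : k) (QEval.h (k := k) (hA := hA) (bra := bra) (u := u) (v := v))⟩
  smul_mem' := by
    rintro c a ⟨x, hx⟩
    exact ⟨_, hx.smul c⟩

lemma exists_P {k A : Type*} [Field k] [Ring A] [Algebra k A] (hA : A) (bra : A → A → A)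
    (u v : A) {p : ℕ} (hp : p.Prime) (hp2 : 2 < p) [CharP k p] :
    ∃ w, IsPval k p hA bra u v w := by
  have := prodP_mem (QS k hA bra u v) (he k) (he_comm k) ⟨_, QEval.h⟩
    (by rintro a ⟨x, hx⟩ b ⟨y, hy⟩; exact ⟨_, hx.mul hy⟩)
    (by
      rintro a ⟨x, hx⟩ b ⟨y, hy⟩
      obtain ⟨r, rfl⟩ := QEval_dvd hx
      have e : he k * (r * b - b * r) = he k * r * b - b * (he k * r) := by
        rw [mul_sub, mul_assoc, ← mul_assoc b, ← (he_comm k b).eq, mul_assoc]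
      exact ⟨_, ⟨_, hx.bracket hy e⟩, e⟩)
    hp hp2 (x := Xe k) (y := Ye k) ⟨_, QEval.X⟩ ⟨_, QEval.Y⟩
  obtain ⟨P, ⟨w, hw⟩, e⟩ := (mem_MM _ _).1 this
  exact ⟨w, P, e, hw⟩

abbrev KK (k : Type*) [Field k] := FractionRing (MvPolynomial (Fin 2) k)

/-- Specialisation: `x ↦ 1`, `y ↦ Y / h`, `h ↦ h`. -/
noncomputable def spec (k : Type*) [Field k] : Amb k →ₐ[k] KK k :=
  Polynomial.eval₂AlgHom (FreeAlgebra.lift k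
      ![1, algebraMap (MvPolynomial (Fin 2) k) (KK k) (MvPolynomial.X 1) / algebraMap (MvPolynomial (Fin 2) k) (KK k) (MvPolynomial.X 0)])
    (algebraMap (MvPolynomial (Fin 2) k) (KK k) (MvPolynomial.X 0)) (fun _ => Commute.all _ _)

lemma X0_ne (k : Type*) [Field k] :
    algebraMap (MvPolynomial (Fin 2) k) (KK k) (MvPolynomial.X 0) ≠ 0 := by
  rw [Ne, FaithfulSMul.algebraMap_eq_zero_iff]
  exact MvPolynomial.X_ne_zero 0

lemma spec_he (k : Type*) [Field k] :
    spec k (he k) = algebraMap (MvPolynomial (Fin 2) k) (KK k) (MvPolynomial.X 0) := by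
  simp [spec, he]

lemma spec_X (k : Type*) [Field k] :
    spec k (Xe k) = algebraMap (MvPolynomial (Fin 2) k) (KK k) (MvPolynomial.X 0) := by
  simp [spec, Xe]

lemma spec_Y (k : Type*) [Field k] :
    spec k (Ye k) = algebraMap (MvPolynomial (Fin 2) k) (KK k) (MvPolynomial.X 1) := by
  have := X0_ne k
  simp only [spec, Ye, map_mul, eval₂AlgHom_apply, eval₂_C, eval₂_X, RingHom.coe_coe,
    FreeAlgebra.lift_ι_apply]
  simp [div_mul_cancel₀ _ this]

/-- Evaluations at `(h, x)` commute and are governed by `spec`. -/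
lemma QEval_spec {k A : Type*} [Field k] [Ring A] [Algebra k A] {h : A} {bra : A → A → A}
    {x : A} (B : Subalgebra k A) (φ : MvPolynomial (Fin 2) k →ₐ[k] B)
    (h0 : (φ (MvPolynomial.X 0) : A) = h) (h1 : (φ (MvPolynomial.X 1) : A) = x)
    (hB : ∀ a ∈ B, ∀ b ∈ B, bra a b = 0)
    {q : Amb k} {w : A} (H : QEval k h bra h x q w) :
    ∃ f, spec k q = algebraMap (MvPolynomial (Fin 2) k) (KK k) f ∧ w = φ f := by
  induction H with
  | X => exact ⟨_, spec_X k, h0.symm⟩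
  | Y => exact ⟨_, spec_Y k, h1.symm⟩
  | h => exact ⟨_, spec_he k, h0.symm⟩
  | add _ _ i1 i2 =>
    obtain ⟨f, hf, rfl⟩ := i1
    obtain ⟨g, hg, rfl⟩ := i2
    exact ⟨f + g, by simp [hf, hg], by simp⟩
  | smul c _ i1 =>
    obtain ⟨f, hf, rfl⟩ := i1
    refine ⟨c • f, ?_, by simp⟩
    rw [map_smul, hf, Algebra.smul_def, Algebra.smul_def, map_mul,
      ← IsScalarTower.algebraMap_apply]
  | mul _ _ i1 i2 =>
    obtain ⟨f, hf, rfl⟩ := i1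
    obtain ⟨g, hg, rfl⟩ := i2
    exact ⟨f * g, by simp [hf, hg], by simp⟩
  | bracket _ _ e i1 i2 =>
    obtain ⟨f, hf, rfl⟩ := i1
    obtain ⟨g, hg, rfl⟩ := i2
    refine ⟨0, ?_, ?_⟩
    · have := congrArg (spec k) e
      rw [map_mul, map_sub, map_mul, map_mul, sub_eq_zero.2 (mul_comm _ _), spec_he] at this
      rcases mul_eq_zero.1 ((mul_comm _ _).trans this) with h | h
      · simpa using h
      · first | exact absurd h (X0_ne k) | simpa using h
    · rw [hB _ (φ f).2 _ (φ g).2]; simp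

end Helpers

/-- Let `A` be a restricted quantized algebra over a field `k` of
characteristic `p > 2`: an associative `k[[h]]`-algebra with a bracket
satisfying `h·{a,b} = a*b - b*a`, equipped with a restricted operation
`x ↦ x^[p]` satisfying `h^[p] = h` and
`(xy)^[p] = x^p y^[p] + x^[p] y^p - h^(p-1) x^[p] y^[p] + P(x,y)`.
Then `(h·x)^[p] = h·x^p` for every `x ∈ A`. -/
theorem statement12 {k A : Type*} [Field k] [Ring A]
    [Algebra (PowerSeries k) A] [Algebra k A]
    [IsScalarTower k (PowerSeries k) A]
    {p : ℕ} (hp : p.Prime) (hp2 : 2 < p) [CharP k p]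
    (h : A) (hdef : h = algebraMap (PowerSeries k) A PowerSeries.X)
    (bra : A → A → A)
    -- quantized algebra axioms for the bracket
    (hbra : ∀ a b : A, h * bra a b = a * b - b * a)
    (hbadd : ∀ x y z : A, bra (x + y) z = bra x z + bra y z)
    (hbsmul : ∀ (c : k) (x y : A), bra (c • x) y = c • bra x y)
    (hbh : ∀ x y : A, bra (h * x) y = h * bra x y)
    (hbanti : ∀ x y : A, bra x y = - bra y x)
    (hbjac : ∀ x y z : A, bra x (bra y z) = bra (bra x y) z + bra y (bra x z))
    (hbleib : ∀ x y z : A, bra x (y * z) = bra x y * z + y * bra x z)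
    -- the restricted structure x ↦ pf x = x^[p]
    (pf : A → A)
    (hres1 : ∀ x y : A, bra (pf x) y = (fun z => bra x z)^[p] y)
    (hres2 : ∀ (c : k) (x : A), pf (c • x) = c ^ p • pf x)
    (hresL : ∀ x y w : A, IsLval k p h bra x y w →
      pf (x + y) = pf x + pf y + w)
    (hresh : pf h = h)
    (hresP : ∀ x y w : A, IsPval k p h bra x y w →
      pf (x * y) = x ^ p * pf y + pf x * y ^ p - h ^ (p - 1) * (pf x * pf y) + w) :
    ∀ x : A, pf (h * x) = h * x ^ p := by
  intro x
  have hcen : ∀ a : A, Commute h a := by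
    intro a; rw [hdef]; exact Algebra.commutes _ _
  have hb0 : ∀ a, bra 0 a = 0 := by
    intro a
    have := hbadd 0 0 a
    rw [add_zero] at this
    exact left_eq_add.1 this
  have hb0' : ∀ a, bra a 0 = 0 := by
    intro a; rw [hbanti, hb0, neg_zero]
  have hb1' : ∀ a, bra a 1 = 0 := by
    intro a
    have := hbleib a 1 1
    rw [mul_one, mul_one, one_mul] at this
    exact left_eq_add.1 this
  have hb1 : ∀ a, bra 1 a = 0 := by
    intro a; rw [hbanti, hb1', neg_zero]
  have hbhl : ∀ a, bra h a = 0 := by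
    intro a
    have := hbh 1 a
    rwa [mul_one, hb1, mul_zero] at this
  have hbhr : ∀ a, bra a h = 0 := by
    intro a; rw [hbanti, hbhl, neg_zero]
  have hbxx : bra x x = 0 := by
    have h1 := hbanti x x
    have h2 : (2 : k) • bra x x = 0 := by
      rw [two_smul]; nth_rewrite 2 [h1]; exact add_neg_cancel _
    have h3 : (2 : k) ≠ 0 := by
      have : ((2 : ℕ) : k) ≠ 0 := by
        rw [Ne, CharP.cast_eq_zero_iff k p]
        exact Nat.not_dvd_of_pos_of_lt (by omega) hp2
      exact_mod_cast this
    have h4 := congrArg (fun z => (2 : k)⁻¹ • z) h2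
    simpa [smul_smul, h3] using h4
  -- bracket vanishes on the subalgebra generated by h, x
  have hcl : ∀ a : A, bra a h = 0 → bra a x = 0 →
      ∀ b ∈ Algebra.adjoin k ({h, x} : Set A), bra a b = 0 := by
    intro a ah ax b hb
    induction hb using Algebra.adjoin_induction with
    | mem b hb =>
      rcases hb with rfl | rfl
      · exact ah
      · exact ax
    | algebraMap c =>
      rw [Algebra.algebraMap_eq_smul_one, hbanti, hbsmul, hb1, smul_zero, neg_zero]
    | add b c _ _ h1 h2 =>
      rw [hbanti, hbadd, hbanti b, hbanti c, h1, h2]; simp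
    | mul b c _ _ h1 h2 => rw [hbleib, h1, h2]; simp
  have hB : ∀ a ∈ Algebra.adjoin k ({h, x} : Set A),
      ∀ b ∈ Algebra.adjoin k ({h, x} : Set A), bra a b = 0 := by
    intro a ha
    refine hcl a (hbhr a) ?_
    rw [hbanti, hcl x (hbhr x) hbxx a ha, neg_zero]
  letI : CommRing (Algebra.adjoin k ({h, x} : Set A)) :=
    Algebra.adjoinCommRingOfComm k (by
      rintro a (rfl | rfl) b (rfl | rfl)
      · rfl
      · exact (hcen _).eq
      · exact (hcen _).eq.symm
      · rfl)
  let φ : MvPolynomial (Fin 2) k →ₐ[k] Algebra.adjoin k ({h, x} : Set A) :=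
    MvPolynomial.aeval ![⟨h, Algebra.subset_adjoin (by simp)⟩,
      ⟨x, Algebra.subset_adjoin (by simp)⟩]
  obtain ⟨w, hw⟩ := exists_P (k := k) h bra h x hp hp2
  have hw0 : w = 0 := by
    obtain ⟨P, hP, hPw⟩ := hw
    obtain ⟨f, hf, rfl⟩ := QEval_spec _ φ (by simp [φ]) (by simp [φ]) hB hPw
    have e := congrArg (spec k) hP
    rw [map_mul, map_pow, spec_he, map_sub, map_mul, map_pow, map_pow, map_pow, map_mul,
      mul_pow, sub_self] at e
    have e2 := (mul_eq_zero.1 e).resolve_left (pow_ne_zero _ (X0_ne k))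
    rw [hf, FaithfulSMul.algebraMap_eq_zero_iff] at e2
    rw [e2]; simp
  have hfin := hresP h x w hw
  have hpow : h ^ (p - 1) * h = h ^ p := by
    rw [← pow_succ]; congr 1; omega
  rw [hfin, hw0, hresh, ← mul_assoc, hpow]
  abel
end
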